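/- arXiv:2311.04136 — 3 statements merged into one kernel-verified Lean document; each statement's English description precedes it below -/
import Mathlib

section
/- Let S = K[x_1,…,x_n] be a standard graded polynomial ring over a field K of prime characteristic p, and let I ⊂ S be a proper nonzero unmixed monomial ideal. Then the sequence e ↦ v(I^{[p^e]})/p^e converges to v(I) + height(I) as e → ∞. -/
open MvPolynomial

attribute [local instance] MvPolynomial.gradedAlgebra

noncomputable section

variable {K : Type*} [Field K] {n : ℕ}

/-- The `q`-th Frobenius power `I^{[q]}` of an ideal. -/
def frobPow (I : Ideal (MvPolynomial (Fin n) K)) (q : ℕ) : Ideal (MvPolynomial (Fin n) K) :=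
  Ideal.span ((fun a => a ^ q) '' (I : Set (MvPolynomial (Fin n) K)))

/-- The associated primes of `S/I`. -/
def Ass (I : Ideal (MvPolynomial (Fin n) K)) : Set (Ideal (MvPolynomial (Fin n) K)) :=
  associatedPrimes (MvPolynomial (Fin n) K) (MvPolynomial (Fin n) K ⧸ I)

/-- The v-number of a graded ideal. -/
def vnum (I : Ideal (MvPolynomial (Fin n) K)) : ℕ :=
  sInf {d : ℕ | ∃ f : MvPolynomial (Fin n) K, f.IsHomogeneous d ∧
    ∃ 𝔭 ∈ Ass I, I.colon (Ideal.span {f}) = 𝔭}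

/-- The local v-number `v_𝔭(I)`. -/
def vnumLocal (I 𝔭 : Ideal (MvPolynomial (Fin n) K)) : ℕ :=
  sInf {d : ℕ | ∃ f : MvPolynomial (Fin n) K, f.IsHomogeneous d ∧
    I.colon (Ideal.span {f}) = 𝔭}

/-- The invariant `α_q(I)`. -/
def alphaq (I : Ideal (MvPolynomial (Fin n) K)) (q : ℕ) : ℕ :=
  sInf {d : ℕ | ∃ f : MvPolynomial (Fin n) K, f.IsHomogeneous d ∧
    f ∈ (frobPow I q).colon I ∧ f ∉ frobPow I q}

/-- The height of an ideal: the minimal height of an associated prime. -/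
def heightI (I : Ideal (MvPolynomial (Fin n) K)) : ℕ :=
  sInf {h : ℕ | ∃ 𝔭 ∈ Ass I, ∃ h𝔭 : 𝔭.IsPrime,
    Order.height (⟨𝔭, h𝔭⟩ : PrimeSpectrum (MvPolynomial (Fin n) K)) = (h : ℕ∞)}

/-- The big height of an ideal: the maximal height of an associated prime. -/
def bightI (I : Ideal (MvPolynomial (Fin n) K)) : ℕ :=
  sSup {h : ℕ | ∃ 𝔭 ∈ Ass I, ∃ h𝔭 : 𝔭.IsPrime,
    Order.height (⟨𝔭, h𝔭⟩ : PrimeSpectrum (MvPolynomial (Fin n) K)) = (h : ℕ∞)}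

/-- A graded (homogeneous) ideal with respect to the standard grading. -/
def IsGraded (I : Ideal (MvPolynomial (Fin n) K)) : Prop :=
  Ideal.IsHomogeneous (homogeneousSubmodule (Fin n) K) I

/-- A monomial ideal. -/
def IsMonomialIdeal (I : Ideal (MvPolynomial (Fin n) K)) : Prop :=
  ∃ s : Set (Fin n →₀ ℕ), I = Ideal.span ((fun a => monomial a (1 : K)) '' s)

section ColonIdeal

/-!
For a monomial ideal `I`, a prime of the form `I : f` is generated by variables and is already
equal to `I : x ^ b` for some monomial `x ^ b` of `f`. So both `Ass I` and `v(I)` can be read off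
from the pairs `(b, A)` with `I : x ^ b = (x_i : i ∈ A)`. A monomial `x ^ c` lies in `I^{[q]}` if
and only if `x ^ ⌊c / q⌋` lies in `I`. Hence `(b, A)` is such a pair for `I^{[q]}` if and only if
`(⌊b / q⌋, A)` is one for `I` and `b_i ≡ -1 mod q` for all `i ∈ A`. The smallest `b` over a given
pair `(a, A)` has degree `q |a| + (q - 1) |A|`, and `|A| = height I` by unmixedness. Therefore
`v(I^{[q]}) = q v(I) + (q - 1) height I`.
-/

variable {R : Type*} [CommRing R] {I : Ideal R}

theorem mem_associatedPrimes_quotient_iff [IsNoetherianRing R] {P : Ideal R} :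
    P ∈ associatedPrimes R (R ⧸ I) ↔ P.IsPrime ∧ ∃ f, I.colon {f} = P := by
  have colon_mk (f : R) :
      (⊥ : Submodule R (R ⧸ I)).colon {Ideal.Quotient.mk I f} = I.colon {f} := by
    ext g
    rw [Submodule.mem_colon_singleton, Submodule.mem_colon_singleton, Submodule.mem_bot,
      ← Ideal.Quotient.eq_zero_iff_mem]
    rfl
  rw [AssociatedPrimes.mem_iff, isAssociatedPrime_iff, Ideal.Quotient.mk_surjective.exists]
  simp only [colon_mk, eq_comm]

theorem colon_singleton_mul_of_notMem {a f : R} (hprime : (I.colon {f}).IsPrime)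
    (ha : a ∉ I.colon {f}) : I.colon {a * f} = I.colon {f} := by
  ext g
  have : g ∈ I.colon {a * f} ↔ g * a ∈ I.colon {f} := by
    simp only [Submodule.mem_colon_singleton, smul_eq_mul, mul_assoc]
  rw [this, hprime.mul_mem_iff_mem_or_mem, or_iff_left ha]

end ColonIdeal

section MonomialIdeal

variable {σ R : Type*} [CommRing R] {M : Set (σ →₀ ℕ)} {hM : IsUpperSet M}

theorem mem_restrictSupportIdeal {f : MvPolynomial σ R} :
    f ∈ restrictSupportIdeal R M hM ↔ ∀ c ∈ f.support, c ∈ M :=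
  Iff.rfl

theorem restrictSupportIdeal_eq_span {s : Set (σ →₀ ℕ)} (hs : (upperClosure s : Set _) = M) :
    restrictSupportIdeal R M hM = Ideal.span ((fun a => monomial a (1 : R)) '' s) := by
  ext f
  subst hs
  rw [mem_ideal_span_monomial_image]
  rfl

theorem support_monomial_one_mul (a : σ →₀ ℕ) (f : MvPolynomial σ R) :
    (monomial a (1 : R) * f).support = f.support.map (addLeftEmbedding a) :=
  AddMonoidAlgebra.support_coeff_single_mul f 1 (by simp) a

theorem exists_add_eq_support_filter (N : Set (σ →₀ ℕ)) [DecidablePred (· ∈ N)]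
    (f : MvPolynomial σ R) :
    ∃ g h : MvPolynomial σ R, g + h = f ∧ g.support = {c ∈ f.support | c ∈ N} ∧
      h.support = {c ∈ f.support | c ∉ N} :=
  ⟨.ofCoeff (Finsupp.filter (· ∈ N) (AddMonoidAlgebra.coeff f)),
    .ofCoeff (Finsupp.filter (· ∉ N) (AddMonoidAlgebra.coeff f)),
    AddMonoidAlgebra.coeff_injective (Finsupp.filter_add_filter_not _ (· ∈ N)), rfl, rfl⟩

theorem isPrime_span_X_image [IsDomain R] (A : Set σ) :
    (Ideal.span (X '' A : Set (MvPolynomial σ R))).IsPrime := by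
  classical
  set P := Ideal.span (X '' A : Set (MvPolynomial σ R))
  let killVars : MvPolynomial σ R →ₐ[R] MvPolynomial σ R :=
    aeval fun i => if i ∈ A then 0 else X i
  have mk_comp_killVars : (Ideal.Quotient.mkₐ R P).comp killVars = Ideal.Quotient.mkₐ R P := by
    ext i
    by_cases hi : i ∈ A
    · have mk_X : Ideal.Quotient.mk P (X i) = 0 :=
        Ideal.Quotient.eq_zero_iff_mem.2 (Ideal.subset_span (Set.mem_image_of_mem X hi))
      simp [killVars, hi, mk_X]
    · simp [killVars, hi]
  have ker_killVars : RingHom.ker killVars = P := by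
    apply le_antisymm
    · intro f hf
      have := DFunLike.congr_fun mk_comp_killVars f
      rw [RingHom.mem_ker] at hf
      rwa [AlgHom.comp_apply, hf, map_zero, eq_comm, Ideal.Quotient.mkₐ_eq_mk,
        Ideal.Quotient.eq_zero_iff_mem] at this
    · rw [Ideal.span_le]
      rintro _ ⟨i, hi, rfl⟩
      simp [killVars, hi]
  exact ker_killVars ▸ RingHom.ker_isPrime killVars

theorem X_mem_span_X_image_iff [Nontrivial R] {A : Set σ} {i : σ} :
    X i ∈ Ideal.span (X '' A : Set (MvPolynomial σ R)) ↔ i ∈ A := by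
  classical
  simp [mem_ideal_span_X_image, support_X, Finsupp.single_apply]

theorem height_span_X_image [IsDomain R] [IsNoetherianRing R] [Finite σ] (A : Finset σ) :
    (Ideal.span (X '' A : Set (MvPolynomial σ R))).height = A.card := by
  classical
  apply le_antisymm
  · have := isPrime_span_X_image (R := R) (A : Set σ)
    refine (Ideal.height_le_card_of_mem_minimalPrimes_span_finset (s := A.image X) ?_).trans
      (mod_cast Finset.card_image_le)
    rw [Finset.coe_image, Ideal.minimalPrimes_eq_subsingleton_self, Set.mem_singleton_iff]
  · induction A using Finset.induction_on with
    | empty => simp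
    | insert i A hi ih =>
      have := isPrime_span_X_image (R := R) (A : Set σ)
      have := isPrime_span_X_image (R := R) ((insert i A : Finset σ) : Set σ)
      have hlt : Ideal.span (X '' A : Set (MvPolynomial σ R)) <
          Ideal.span (X '' (insert i A : Finset σ)) := by
        refine SetLike.lt_iff_le_and_exists.2
          ⟨Ideal.span_mono (Set.image_mono (by simp)), X i, ?_, ?_⟩
        · simp [X_mem_span_X_image_iff]
        · simpa [X_mem_span_X_image_iff] using hi
      rw [Finset.card_insert_of_notMem hi, Nat.cast_succ]
      exact (add_le_add_left ih 1).trans (Ideal.height_add_one_le_of_lt_of_isPrime hlt)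

theorem exists_add_mem_of_mem_colon [IsDomain R] {f g : MvPolynomial σ R}
    (hg : g ∈ (restrictSupportIdeal R M hM).colon {f}) (hg0 : g ≠ 0)
    (hf : f ∉ restrictSupportIdeal R M hM) :
    ∃ a ∈ g.support, ∃ b ∈ f.support, b ∉ M ∧ a + b ∈ M := by
  classical
  obtain ⟨f₁, f₂, rfl, hf₁, hf₂⟩ := exists_add_eq_support_filter M f
  have hf₁_mem : f₁ ∈ restrictSupportIdeal R M hM := by
    rw [mem_restrictSupportIdeal, hf₁]
    exact fun c hc => (Finset.mem_filter.1 hc).2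
  rw [Ideal.add_mem_iff_right _ hf₁_mem] at hf
  have hgf₂ : g * f₂ ∈ restrictSupportIdeal R M hM := by
    rw [Submodule.mem_colon_singleton, smul_eq_mul, mul_add] at hg
    exact (Ideal.add_mem_iff_right _ (Ideal.mul_mem_left _ g hf₁_mem)).1 hg
  have hf₂0 : f₂ ≠ 0 := fun h => hf (h ▸ zero_mem _)
  -- A sum `a + b` attained only once cannot cancel in `g * f₂`.
  obtain ⟨a, ha, b, hb, hab⟩ := UniqueSums.uniqueAdd_of_nonempty
    (support_nonempty.2 hg0) (support_nonempty.2 hf₂0)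
  have coeff_add : coeff (a + b) (g * f₂) = coeff a g * coeff b f₂ :=
    AddMonoidAlgebra.coeff_mul_add_of_uniqueAdd hab
  have hab_mem : a + b ∈ M := by
    refine mem_restrictSupportIdeal.1 hgf₂ _ (mem_support_iff.2 ?_)
    rw [coeff_add]
    exact mul_ne_zero (mem_support_iff.1 ha) (mem_support_iff.1 hb)
  rw [hf₂, Finset.mem_filter] at hb
  exact ⟨a, ha, b, hb.1, hb.2, hab_mem⟩

theorem card_filter_notMem_monomial_mul_lt [DecidablePred (· ∈ M)] (hM : IsUpperSet M)
    {f : MvPolynomial σ R} {a b : σ →₀ ℕ} (hb : b ∈ f.support) (hbM : b ∉ M) (habM : a + b ∈ M) :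
    ((monomial a 1 * f).support.filter (· ∉ M)).card < (f.support.filter (· ∉ M)).card := by
  rw [support_monomial_one_mul, Finset.filter_map, Finset.card_map]
  refine Finset.card_lt_card (Finset.ssubset_iff_of_subset ?_ |>.2 ⟨b, ?_, ?_⟩)
  · exact Finset.monotone_filter_right _ fun c _ hc hcM => hc (hM le_add_self hcM)
  · exact Finset.mem_filter.2 ⟨hb, hbM⟩
  · simp [habM]

theorem exists_monomial_mem_colon [IsDomain R] {f g : MvPolynomial σ R}
    (hprime : ((restrictSupportIdeal R M hM).colon {f}).IsPrime)
    (hg : g ∈ (restrictSupportIdeal R M hM).colon {f}) (hg0 : g ≠ 0) :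
    ∃ a ∈ g.support, monomial a 1 ∈ (restrictSupportIdeal R M hM).colon {f} := by
  classical
  induction hk : (f.support.filter (· ∉ M)).card using Nat.strong_induction_on generalizing f with
  | _ k ih =>
    have hf : f ∉ restrictSupportIdeal R M hM := fun hf =>
      hprime.ne_top ((Submodule.colon_eq_top_iff_subset _).2 (by simpa using hf))
    obtain ⟨a, ha, b, hb, hbM, habM⟩ := exists_add_mem_of_mem_colon hg hg0 hf
    by_cases ha_mem : monomial a 1 ∈ (restrictSupportIdeal R M hM).colon {f}
    · exact ⟨a, ha, ha_mem⟩
    -- Multiplying `f` by `x ^ a` keeps the colon and moves a further term of `f` into the ideal.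
    · have hcolon := colon_singleton_mul_of_notMem hprime ha_mem
      rw [← hcolon] at hprime hg ⊢
      exact ih _ (hk ▸ card_filter_notMem_monomial_mul_lt hM hb hbM habM) hprime hg rfl

theorem monomial_one_mem_iff_of_isPrime {P : Ideal (MvPolynomial σ R)} (hP : P.IsPrime)
    {a : σ →₀ ℕ} : monomial a 1 ∈ P ↔ ∃ i, X i ∈ P ∧ a i ≠ 0 := by
  rw [monomial_eq, C_1, one_mul, Finsupp.prod, hP.prod_mem_iff]
  constructor
  · rintro ⟨i, hi, hXi⟩
    exact ⟨i, hP.mem_of_pow_mem _ hXi, Finsupp.mem_support_iff.1 hi⟩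
  · rintro ⟨i, hXi, hi⟩
    exact ⟨i, Finsupp.mem_support_iff.2 hi, P.pow_mem_of_mem hXi _ (Nat.pos_of_ne_zero hi)⟩

theorem colon_eq_span_X_image_of_isPrime [IsDomain R] {f : MvPolynomial σ R}
    (hprime : ((restrictSupportIdeal R M hM).colon {f}).IsPrime) :
    (restrictSupportIdeal R M hM).colon {f} =
      Ideal.span (X '' {i | X i ∈ (restrictSupportIdeal R M hM).colon {f}}) := by
  classical
  set P := (restrictSupportIdeal R M hM).colon {f}
  have span_le : Ideal.span (X '' {i | X i ∈ P}) ≤ P := by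
    rw [Ideal.span_le, Set.image_subset_iff]
    exact fun i hi => hi
  refine le_antisymm (fun g hg => ?_) span_le
  obtain ⟨g₁, g₂, rfl, hg₁, hg₂⟩ :=
    exists_add_eq_support_filter {a | ∃ i ∈ {i | X i ∈ P}, a i ≠ 0} g
  have hg₁_mem : g₁ ∈ Ideal.span (X '' {i | X i ∈ P}) := by
    rw [mem_ideal_span_X_image, hg₁]
    exact fun a ha => (Finset.mem_filter.1 ha).2
  have hg₂_mem : g₂ ∈ P := (P.add_mem_iff_right (span_le hg₁_mem)).1 hg
  have hg₂_zero : g₂ = 0 := by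
    by_contra hg₂0
    obtain ⟨a, ha, ha_mem⟩ := exists_monomial_mem_colon hprime hg₂_mem hg₂0
    rw [hg₂, Finset.mem_filter] at ha
    exact ha.2 ((monomial_one_mem_iff_of_isPrime hprime).1 ha_mem)
  rwa [hg₂_zero, add_zero]

theorem monomial_one_mem_colon_iff {a : σ →₀ ℕ} {f : MvPolynomial σ R} :
    monomial a 1 ∈ (restrictSupportIdeal R M hM).colon {f} ↔ ∀ b ∈ f.support, a + b ∈ M := by
  rw [Submodule.mem_colon_singleton, smul_eq_mul, mem_restrictSupportIdeal,
    support_monomial_one_mul, Finset.forall_mem_map]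
  rfl

theorem mem_colon_monomial_one_iff {b : σ →₀ ℕ} {g : MvPolynomial σ R} :
    g ∈ (restrictSupportIdeal R M hM).colon {monomial b 1} ↔ ∀ u ∈ g.support, u + b ∈ M := by
  simp only [add_comm _ b, ← monomial_one_mem_colon_iff (hM := hM), Submodule.mem_colon_singleton,
    smul_eq_mul, mul_comm g]

/-- `IsColonExponent M b A` is the combinatorial form of the colon identity
`I : x ^ b = (x_i : i ∈ A)` for the monomial ideal `I` spanned by the monomials with exponent
in the upper set `M`. The coefficient ring does not enter, see `isColonExponent_iff`. -/
def IsColonExponent (M : Set (σ →₀ ℕ)) (b : σ →₀ ℕ) (A : Finset σ) : Prop :=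
  ∀ u, u + b ∈ M ↔ ∃ i ∈ A, u i ≠ 0

theorem isColonExponent_iff [Nontrivial R] {b : σ →₀ ℕ} {A : Finset σ} :
    IsColonExponent M b A ↔
      (restrictSupportIdeal R M hM).colon {monomial b 1} = Ideal.span (X '' (A : Set σ)) := by
  classical
  constructor
  · intro h
    ext g
    rw [mem_colon_monomial_one_iff, mem_ideal_span_X_image]
    exact forall₂_congr fun u _ => h u
  · intro h u
    have := SetLike.ext_iff.1 h (monomial u 1)
    rw [mem_colon_monomial_one_iff, mem_ideal_span_X_image, support_monomial] at this
    simpa using this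

theorem inf_colon_monomial_le_colon (I : Ideal (MvPolynomial σ R)) (f : MvPolynomial σ R) :
    f.support.inf (fun b => I.colon {monomial b 1}) ≤ I.colon {f} := by
  intro g hg
  simp only [Submodule.mem_finsetInf, Submodule.mem_colon_singleton, smul_eq_mul] at hg ⊢
  rw [← support_sum_monomial_coeff f, Finset.mul_sum]
  refine I.sum_mem fun b hb => ?_
  rw [← mul_one (coeff b f), ← C_mul_monomial, mul_left_comm]
  exact I.mul_mem_left _ (hg b hb)

theorem exists_colon_monomial_one_eq [IsDomain R] {f : MvPolynomial σ R}
    (hprime : ((restrictSupportIdeal R M hM).colon {f}).IsPrime) :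
    ∃ b ∈ f.support, (restrictSupportIdeal R M hM).colon {monomial b 1} =
      (restrictSupportIdeal R M hM).colon {f} := by
  obtain ⟨b, hb, hle⟩ := hprime.inf_le'.1 (inf_colon_monomial_le_colon _ f)
  refine ⟨b, hb, le_antisymm hle ?_⟩
  rw [colon_eq_span_X_image_of_isPrime hprime, Ideal.span_le]
  rintro _ ⟨i, hi, rfl⟩
  rw [SetLike.mem_coe, mem_colon_monomial_one_iff, support_X]
  simpa only [Finset.mem_singleton, forall_eq] using monomial_one_mem_colon_iff.1 hi b hb

theorem exists_isColonExponent_of_isPrime_colon [IsDomain R] [Finite σ] {f : MvPolynomial σ R}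
    (hprime : ((restrictSupportIdeal R M hM).colon {f}).IsPrime) :
    ∃ b ∈ f.support, ∃ A, IsColonExponent M b A := by
  obtain ⟨b, hb, hcolon⟩ := exists_colon_monomial_one_eq hprime
  obtain ⟨A, hA⟩ :=
    (Set.toFinite {i | X i ∈ (restrictSupportIdeal R M hM).colon {f}}).exists_finset_coe
  refine ⟨b, hb, A, isColonExponent_iff.2 (hcolon.trans ?_)⟩
  rw [hA, ← colon_eq_span_X_image_of_isPrime hprime]

end MonomialIdeal

section FrobeniusExponents

variable {σ : Type*} {M : Set (σ →₀ ℕ)} {q : ℕ} {b : σ →₀ ℕ} {A : Finset σ}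

theorem isUpperSet_floorDiv_preimage (hM : IsUpperSet M) (hq : 0 < q) :
    IsUpperSet ((· ⌊/⌋ q) ⁻¹' M) :=
  hM.preimage (gc_floorDiv_smul hq).monotone_u

theorem smul_add_floorDiv (hq : 0 < q) (u b : σ →₀ ℕ) : (q • u + b) ⌊/⌋ q = u + b ⌊/⌋ q := by
  ext i
  simp [Finsupp.floorDiv_apply, Nat.mul_add_div hq]

theorem exists_add_floorDiv_eq (u b : σ →₀ ℕ) (q : ℕ) (hq : 0 < q) :
    ∃ v, (u + b) ⌊/⌋ q = v + b ⌊/⌋ q ∧ ∀ i, q ∣ b i + 1 → (v i ≠ 0 ↔ u i ≠ 0) := by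
  refine ⟨(u + b) ⌊/⌋ q - b ⌊/⌋ q,
    (tsub_add_cancel_of_le ((gc_floorDiv_smul hq).monotone_u le_add_self)).symm, fun i hi => ?_⟩
  have succ_floor : (b i + 1) / q = b i / q + 1 := by rw [Nat.succ_div, if_pos hi]
  rw [Finsupp.tsub_apply, Finsupp.floorDiv_apply, Finsupp.floorDiv_apply, Nat.floorDiv_eq_div,
    Nat.floorDiv_eq_div, Finsupp.add_apply, ← Nat.pos_iff_ne_zero, ← Nat.pos_iff_ne_zero,
    tsub_pos_iff_lt]
  rcases Nat.eq_zero_or_pos (u i) with h | h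
  · simp [h]
  · have := Nat.div_le_div_right (c := q) (show b i + 1 ≤ u i + b i by lia)
    lia

theorem single_one_add_floorDiv {i : σ} (hi : ¬ q ∣ b i + 1) :
    (Finsupp.single i 1 + b) ⌊/⌋ q = b ⌊/⌋ q := by
  classical
  ext j
  obtain rfl | hj := eq_or_ne i j
  · simp [Finsupp.floorDiv_apply, add_comm 1, Nat.succ_div, hi]
  · simp [Finsupp.floorDiv_apply, Finsupp.single_eq_of_ne' hj]

theorem isColonExponent_floorDiv_preimage_iff (hq : 0 < q) :
    IsColonExponent ((· ⌊/⌋ q) ⁻¹' M) b A ↔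
      IsColonExponent M (b ⌊/⌋ q) A ∧ ∀ i ∈ A, q ∣ b i + 1 := by
  constructor
  · intro h
    have h_floor : IsColonExponent M (b ⌊/⌋ q) A := by
      intro u
      simpa [smul_add_floorDiv hq, hq.ne'] using h (q • u)
    refine ⟨h_floor, fun i hi => by_contra fun hdvd => ?_⟩
    have hb : b ⌊/⌋ q ∈ M := by
      rw [← single_one_add_floorDiv hdvd]
      exact (h (Finsupp.single i 1)).2 ⟨i, hi, by simp⟩
    simpa [hb] using h_floor 0
  · rintro ⟨h_floor, hdvd⟩ u
    obtain ⟨v, huv, hv⟩ := exists_add_floorDiv_eq u b q hq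
    rw [Set.mem_preimage, huv, h_floor v]
    exact exists_congr fun i => and_congr_right fun hi => hv i (hdvd i hi)

/-- The exponent of `(x ^ b) ^ q * ∏ i ∈ A, x_i ^ (q - 1)`, which is the smallest exponent over `b`
witnessing `(x_i : i ∈ A)` as a colon of the `q`-th Frobenius power. -/
def frobExponent (q : ℕ) (b : σ →₀ ℕ) (A : Finset σ) : σ →₀ ℕ :=
  q • b + Finsupp.indicator A fun _ _ => q - 1

theorem frobExponent_apply_of_mem {i : σ} (hi : i ∈ A) :
    frobExponent q b A i = q * b i + (q - 1) := by
  simp [frobExponent, Finsupp.indicator_of_mem hi]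

theorem frobExponent_floorDiv (hq : 0 < q) : frobExponent q b A ⌊/⌋ q = b := by
  classical
  rw [frobExponent, smul_add_floorDiv hq]
  ext i
  simp only [Finsupp.add_apply, Finsupp.floorDiv_apply, Finsupp.indicator_apply,
    Nat.floorDiv_eq_div]
  split_ifs
  · rw [Nat.div_eq_of_lt (Nat.sub_one_lt hq.ne'), add_zero]
  · simp

theorem degree_frobExponent : (frobExponent q b A).degree = q * b.degree + A.card * (q - 1) := by
  rw [frobExponent, map_add, map_nsmul, smul_eq_mul]
  congr 1
  simp only [Finsupp.indicator_eq_sum_attach_single, map_sum, Finsupp.degree_single,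
    Finset.sum_const, Finset.card_attach, smul_eq_mul]

theorem frobExponent_floorDiv_le {c : σ →₀ ℕ} (hc : ∀ i ∈ A, q ∣ c i + 1) :
    frobExponent q (c ⌊/⌋ q) A ≤ c := by
  intro i
  by_cases hi : i ∈ A
  · have mul_succ_floor : q * (c i / q + 1) = c i + 1 := by
      rw [← Nat.mul_div_cancel' (hc i hi), Nat.succ_div, if_pos (hc i hi)]
    simp only [frobExponent_apply_of_mem hi, Finsupp.floorDiv_apply, Nat.floorDiv_eq_div]
    lia
  · simpa [frobExponent, Finsupp.indicator_of_notMem hi, Finsupp.floorDiv_apply] using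
      Nat.mul_div_le (c i) q

theorem IsColonExponent.frobExponent_floorDiv_preimage (hq : 0 < q) (h : IsColonExponent M b A) :
    IsColonExponent ((· ⌊/⌋ q) ⁻¹' M) (frobExponent q b A) A := by
  refine (isColonExponent_floorDiv_preimage_iff hq).2 ⟨?_, fun i hi => ⟨b i + 1, ?_⟩⟩
  · rwa [frobExponent_floorDiv hq]
  · rw [frobExponent_apply_of_mem hi, mul_add_one]
    lia

theorem IsColonExponent.mul_degree_floorDiv_add_le {c : σ →₀ ℕ} (hq : 0 < q)
    (h : IsColonExponent ((· ⌊/⌋ q) ⁻¹' M) c A) :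
    q * (c ⌊/⌋ q).degree + A.card * (q - 1) ≤ c.degree := by
  rw [← degree_frobExponent]
  exact Finsupp.degree_mono <|
    frobExponent_floorDiv_le ((isColonExponent_floorDiv_preimage_iff hq).1 h).2

end FrobeniusExponents

section FrobeniusPower

variable {σ R : Type*} [CommRing R] {M : Set (σ →₀ ℕ)}

theorem upperClosure_smul_image {q : ℕ} (hM : IsUpperSet M) (hq : 0 < q) :
    (upperClosure ((q • ·) '' M) : Set (σ →₀ ℕ)) = (· ⌊/⌋ q) ⁻¹' M := by
  ext c
  rw [SetLike.mem_coe, mem_upperClosure, Set.exists_mem_image, Set.mem_preimage]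
  simp only [← le_floorDiv_iff_smul_le hq]
  exact ⟨fun ⟨a, ha, hac⟩ => hM hac ha, fun hc => ⟨_, hc, le_rfl⟩⟩

theorem map_iterateFrobenius_restrictSupportIdeal (p : ℕ) [ExpChar R p] (e : ℕ)
    (hM : IsUpperSet M) :
    (restrictSupportIdeal R M hM).map (iterateFrobenius (MvPolynomial σ R) p e) =
      restrictSupportIdeal R ((· ⌊/⌋ p ^ e) ⁻¹' M)
        (isUpperSet_floorDiv_preimage hM (pow_pos (expChar_pos R p) e)) := by
  rw [restrictSupportIdeal_eq_span (upperClosure_smul_image hM (pow_pos (expChar_pos R p) e)),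
    restrictSupportIdeal_eq_span hM.upperClosure, Ideal.map_span, Set.image_image, Set.image_image]
  simp only [iterateFrobenius_def, monomial_pow, one_pow]

end FrobeniusPower

section VNumber

variable {I : Ideal (MvPolynomial (Fin n) K)} {M : Set (Fin n →₀ ℕ)} {hM : IsUpperSet M}
  {b : Fin n →₀ ℕ} {A : Finset (Fin n)}

theorem frobPow_restrictSupportIdeal (p : ℕ) [ExpChar K p] (e : ℕ) (hM : IsUpperSet M) :
    frobPow (restrictSupportIdeal K M hM) (p ^ e) =
      restrictSupportIdeal K ((· ⌊/⌋ p ^ e) ⁻¹' M)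
        (isUpperSet_floorDiv_preimage hM (pow_pos (expChar_pos K p) e)) :=
  map_iterateFrobenius_restrictSupportIdeal p e hM

theorem IsMonomialIdeal.exists_eq_restrictSupportIdeal (h : IsMonomialIdeal I) :
    ∃ (M : Set (Fin n →₀ ℕ)) (hM : IsUpperSet M), I = restrictSupportIdeal K M hM := by
  obtain ⟨s, rfl⟩ := h
  exact ⟨_, (upperClosure s).upper, (restrictSupportIdeal_eq_span rfl).symm⟩

theorem height_eq_heightI_of_mem_Ass (hunm : heightI I = bightI I)
    {P : Ideal (MvPolynomial (Fin n) K)} (hP : P ∈ Ass I) : P.height = heightI I := by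
  have hprime : P.IsPrime := hP.isPrime
  obtain ⟨h, hPh⟩ := ENat.ne_top_iff_exists.1 (Ideal.height_ne_top hprime.ne_top)
  have heightI_le : heightI I ≤ h :=
    Nat.sInf_le ⟨P, hP, hprime, by rw [← PrimeSpectrum.height_eq_orderHeight, hPh]⟩
  have le_bightI : h ≤ bightI I := by
    refine le_csSup ⟨n, ?_⟩ ⟨P, hP, hprime, by rw [← PrimeSpectrum.height_eq_orderHeight, hPh]⟩
    rintro k ⟨Q, -, hQ, hQk⟩
    have := Ideal.height_le_ringKrullDim_of_isPrime (I := Q)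
    rw [← PrimeSpectrum.height_eq_orderHeight] at hQk
    simpa [hQk, MvPolynomial.ringKrullDim_of_isNoetherianRing] using this
  rw [← hPh, le_antisymm heightI_le (le_bightI.trans_eq hunm.symm)]

theorem IsColonExponent.span_X_image_mem_Ass (h : IsColonExponent M b A) :
    Ideal.span (X '' (A : Set (Fin n))) ∈ Ass (restrictSupportIdeal K M hM) :=
  mem_associatedPrimes_quotient_iff.2
    ⟨isPrime_span_X_image _, monomial b 1, isColonExponent_iff.1 h⟩

theorem IsColonExponent.card_eq_heightI (h : IsColonExponent M b A)
    (hunm : heightI (restrictSupportIdeal K M hM) = bightI (restrictSupportIdeal K M hM)) :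
    A.card = heightI (restrictSupportIdeal K M hM) := by
  have := height_eq_heightI_of_mem_Ass hunm h.span_X_image_mem_Ass
  rwa [height_span_X_image, Nat.cast_inj] at this

theorem IsColonExponent.degree_mem_vnum_set (h : IsColonExponent M b A) :
    b.degree ∈ {d : ℕ | ∃ f : MvPolynomial (Fin n) K, f.IsHomogeneous d ∧
      ∃ P ∈ Ass (restrictSupportIdeal K M hM),
        (restrictSupportIdeal K M hM).colon (Ideal.span {f}) = P} :=
  ⟨monomial b 1, isHomogeneous_monomial _ rfl, _, h.span_X_image_mem_Ass,
    Ideal.colon_span.trans (isColonExponent_iff.1 h)⟩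

theorem IsColonExponent.vnum_le_degree (h : IsColonExponent M b A) :
    vnum (restrictSupportIdeal K M hM) ≤ b.degree :=
  Nat.sInf_le h.degree_mem_vnum_set

theorem exists_isColonExponent (htop : restrictSupportIdeal K M hM ≠ ⊤) :
    ∃ b A, IsColonExponent M b A := by
  have : Nontrivial (MvPolynomial (Fin n) K ⧸ restrictSupportIdeal K M hM) :=
    Ideal.Quotient.nontrivial_iff.2 htop
  obtain ⟨P, hP⟩ := associatedPrimes.nonempty (MvPolynomial (Fin n) K)
    (MvPolynomial (Fin n) K ⧸ restrictSupportIdeal K M hM)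
  obtain ⟨hprime, f, rfl⟩ := mem_associatedPrimes_quotient_iff.1 hP
  obtain ⟨b, -, h⟩ := exists_isColonExponent_of_isPrime_colon hprime
  exact ⟨b, h⟩

theorem IsColonExponent.exists_degree_eq_vnum (h : IsColonExponent M b A) (hM : IsUpperSet M) :
    ∃ c B, IsColonExponent M c B ∧ c.degree = vnum (restrictSupportIdeal K M hM) := by
  obtain ⟨f, hf_hom, P, hP, hfP⟩ := Nat.sInf_mem ⟨_, h.degree_mem_vnum_set (K := K) (hM := hM)⟩
  rw [Ideal.colon_span] at hfP
  obtain ⟨c, hc, B, hcB⟩ := exists_isColonExponent_of_isPrime_colon (hfP ▸ hP.isPrime)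
  refine ⟨c, B, hcB, ?_⟩
  rw [Finsupp.degree_eq_weight_one]
  exact hf_hom (mem_support_iff.1 hc)

theorem vnum_frobPow (p : ℕ) [ExpChar K p] (e : ℕ) (hmon : IsMonomialIdeal I) (htop : I ≠ ⊤)
    (hunm : heightI I = bightI I) :
    vnum (frobPow I (p ^ e)) = p ^ e * vnum I + heightI I * (p ^ e - 1) := by
  have hq : 0 < p ^ e := pow_pos (expChar_pos K p) e
  obtain ⟨M, hM, rfl⟩ := hmon.exists_eq_restrictSupportIdeal
  obtain ⟨b₀, A₀, hb₀⟩ := exists_isColonExponent htop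
  obtain ⟨b, A, hb, hb_degree⟩ := hb₀.exists_degree_eq_vnum (K := K) hM
  have hb_frob := hb.frobExponent_floorDiv_preimage hq
  rw [frobPow_restrictSupportIdeal]
  apply le_antisymm
  · rw [← hb.card_eq_heightI hunm, ← hb_degree, ← degree_frobExponent]
    exact hb_frob.vnum_le_degree
  · obtain ⟨c, B, hc, hc_degree⟩ := hb_frob.exists_degree_eq_vnum (K := K)
      (isUpperSet_floorDiv_preimage hM hq)
    have hc_floor := ((isColonExponent_floorDiv_preimage_iff hq).1 hc).1
    rw [← hc_degree, ← hc_floor.card_eq_heightI hunm]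
    refine le_trans ?_ (hc.mul_degree_floorDiv_add_le hq)
    gcongr
    exact hc_floor.vnum_le_degree

end VNumber

theorem stmt14 {K : Type*} [Field K] {n : ℕ} (p : ℕ) (hp : p.Prime) [CharP K p]
    (I : Ideal (MvPolynomial (Fin n) K)) (hmon : IsMonomialIdeal I) (htop : I ≠ ⊤) (hbot : I ≠ ⊥)
    (hunm : heightI I = bightI I) :
    Filter.Tendsto (fun e : ℕ => (vnum (frobPow I (p ^ e)) : ℝ) / (p ^ e : ℝ))
      Filter.atTop (nhds ((vnum I : ℝ) + (heightI I : ℝ))) := by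
  have : ExpChar K p := .prime hp
  have hp_inv_lt : (p : ℝ)⁻¹ < 1 := inv_lt_one_of_one_lt₀ (mod_cast hp.one_lt)
  have hlim : Filter.Tendsto (fun e : ℕ => (vnum I : ℝ) + heightI I * (1 - (p : ℝ)⁻¹ ^ e))
      Filter.atTop (nhds (vnum I + heightI I * (1 - 0))) :=
    ((tendsto_pow_atTop_nhds_zero_of_lt_one (by positivity) hp_inv_lt).const_sub 1
      |>.const_mul _).const_add _
  rw [sub_zero, mul_one] at hlim
  refine hlim.congr fun e => ?_
  have hq : (p : ℝ) ^ e ≠ 0 := pow_ne_zero e (mod_cast hp.ne_zero)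
  rw [vnum_frobPow p e hmon htop hunm]
  push_cast [Nat.cast_sub (Nat.one_le_pow e p hp.pos)]
  rw [inv_pow]
  field_simp

end
end

section
/- Let S = K[x_1,…,x_n] be a standard graded polynomial ring over a field K of prime characteristic p, and let I ⊂ S be a proper nonzero graded ideal. Then α_{pq}(I) ≥ p·α_q(I) for every power q = p^e > 1; consequently the sequence e ↦ α_{p^e}(I)/p^e is non-decreasing in e ≥ 1, and this sequence converges to a real number as e → ∞. -/
open MvPolynomial

attribute [local instance] MvPolynomial.gradedAlgebra

noncomputable section

variable {K : Type*} [Field K] {n : ℕ}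

/-!
Let `(e_i, φ_i)` be a dual basis of `S` over itself along Frobenius, so that
`f = ∑ φ_i(f) ^ p * e_i` with each `φ_i` additive and `φ_i (u ^ p * f) = u * φ_i f`. Then `f`
lies in `J^{[p]}` if and only if every `φ_i f` lies in `J`, and `φ_i` maps `J^{[p]} : I` into
`J : I`, because `s ∈ I` gives `s * φ_i f = φ_i (s ^ p * f)`. Applied to `J = I^{[q]}`, this
sends an `f` of least degree witnessing `α_{pq}(I)` to some `φ_i f` witnessing `α_q(I)`. For the
dual basis made of the products of a basis of `K` over `K^p` with the monomials, `φ_i` divides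
degrees by `p`, whence `p α_q(I) ≤ α_{pq}(I)`.

Conversely, if `g_1, …, g_r` are homogeneous generators of `I`, a product `∏ g_i ^ k_i` outside
`I^{[q]}` with maximal exponents `k_i < q` shows `α_q(I) ≤ q * ∑ deg g_i`; a monotone bounded
sequence converges.
-/

/-- A dual basis of a ring `R` as a module over itself along the `p`-th power map: generators
`elem i` together with `p⁻¹`-linear coordinates recovering every `x` as
`∑ i, (coord x i) ^ p * elem i`. It plays the role of a basis of `R` over its subring of `p`-th
powers; as in the dual basis lemma for projective modules, the generators need not be
independent. -/
structure FrobeniusDualBasis (p : ℕ) (ι R : Type*) [CommSemiring R] where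
  elem : ι → R
  coord : R →+ (ι →₀ R)
  coord_pow_mul (u x : R) : coord (u ^ p * x) = u • coord x
  sum_coord (x : R) : ((coord x).sum fun i c ↦ c ^ p * elem i) = x

namespace FrobeniusDualBasis

section Ideal

variable {p : ℕ} {ι R : Type*} [CommSemiring R] [ExpChar R p] (B : FrobeniusDualBasis p ι R)

theorem mem_map_frobenius_iff {J : Ideal R} {x : R} :
    x ∈ J.map (frobenius R p) ↔ ∀ i, B.coord x i ∈ J := by
  refine ⟨fun hx i ↦ ?_, fun hx ↦ ?_⟩
  · induction hx using Submodule.closure_induction with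
    | zero => simp only [map_zero, Finsupp.zero_apply, zero_mem]
    | add x y _ _ hx hy => simpa only [map_add, Finsupp.add_apply] using add_mem hx hy
    | smul_mem r x hx =>
      obtain ⟨y, hy, rfl⟩ := hx
      have hcoord : B.coord (r * y ^ p) = y • B.coord r := by rw [mul_comm, B.coord_pow_mul]
      simpa only [smul_eq_mul, frobenius_def, hcoord, Finsupp.smul_apply] using J.mul_mem_right _ hy
  · rw [← B.sum_coord x]
    exact sum_mem fun i _ ↦ Ideal.mul_mem_right _ _ (Ideal.mem_map_of_mem _ (hx i))

theorem coord_mem_colon {I J : Ideal R} {x : R} (hx : x ∈ (J.map (frobenius R p)).colon I) (i : ι) :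
    B.coord x i ∈ J.colon I := by
  refine Submodule.mem_colon.2 fun s hs ↦ ?_
  have hsx : s ^ p * x ∈ J.map (frobenius R p) := by
    rw [mul_comm]
    exact Submodule.mem_colon.1 hx _ (I.pow_mem_of_mem hs p (expChar_pos R p))
  have hsφ : B.coord (s ^ p * x) i ∈ J := B.mem_map_frobenius_iff.1 hsx i
  rwa [B.coord_pow_mul, Finsupp.smul_apply, smul_eq_mul, mul_comm] at hsφ

end Ideal

/-- The Frobenius dual basis of a field `K` given by a basis of `K` over `K^p`, equivalently of
`K^{1/p}` over `K`. -/
def ofBasis {ι K : Type*} [Field K] (p : ℕ) [ExpChar K p]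
    (b : Module.Basis ι K (AdjoinPthRoots K)) : FrobeniusDualBasis p ι K where
  elem i := (AdjoinPthRoots.root K).symm (b i)
  coord := (b.repr : AdjoinPthRoots K →+ ι →₀ K).comp
    (AdjoinPthRoots.root K : K →+ AdjoinPthRoots K)
  coord_pow_mul u x := by
    have hroot : AdjoinPthRoots.root K (u ^ p * x) = u • AdjoinPthRoots.root K x := by
      rw [map_mul, map_pow, AdjoinPthRoots.root_pow, Algebra.smul_def]
    exact (congrArg b.repr hroot).trans (map_smul b.repr u _)
  sum_coord x := by
    apply (AdjoinPthRoots.root K).injective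
    rw [map_finsuppSum]
    simp only [AddMonoidHom.coe_comp, AddMonoidHom.coe_coe, Function.comp_apply, map_mul, map_pow,
      AdjoinPthRoots.root_pow, RingEquiv.apply_symm_apply, ← Algebra.smul_def]
    exact b.linearCombination_repr _

section MvPolynomial

theorem smul_mapRange_div_add_mapRange_mod {σ : Type*} (p : ℕ) (m : σ →₀ ℕ) :
    p • m.mapRange (· / p) (Nat.zero_div p) + m.mapRange (· % p) (Nat.zero_mod p) = m := by
  ext i
  simp [Nat.div_add_mod]

variable {p : ℕ} {ι σ R : Type*} [CommSemiring R]

/-- The coordinates on `MvPolynomial σ R` induced by a Frobenius dual basis of `R`: the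
coordinate of index `(r, i)` sends `c x^m` to `(coord c i) x^{m / p}` if `r = m % p`, and to `0`
otherwise. -/
def mvPolynomialCoord (B : FrobeniusDualBasis p ι R) :
    MvPolynomial σ R →+ ((σ →₀ ℕ) × ι →₀ MvPolynomial σ R) :=
  (Finsupp.liftAddHom fun m : σ →₀ ℕ ↦
    (Finsupp.mapDomain.addMonoidHom (Prod.mk (m.mapRange (· % p) (Nat.zero_mod p)))).comp <|
      (Finsupp.mapRange.addMonoidHom
        (monomial (m.mapRange (· / p) (Nat.zero_div p))).toAddMonoidHom).comp B.coord).comp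
    AddMonoidAlgebra.coeffAddEquiv.toAddMonoidHom

variable (B : FrobeniusDualBasis p ι R)

theorem mvPolynomialCoord_monomial (m : σ →₀ ℕ) (c : R) :
    B.mvPolynomialCoord (monomial m c) =
      ((B.coord c).mapRange (monomial (m.mapRange (· / p) (Nat.zero_div p))) (map_zero _)).mapDomain
        (Prod.mk (m.mapRange (· % p) (Nat.zero_mod p))) :=
  Finsupp.liftAddHom_apply_single _ _ _

theorem mvPolynomialCoord_pow_mul [ExpChar R p] (u f : MvPolynomial σ R) :
    B.mvPolynomialCoord (u ^ p * f) = u • B.mvPolynomialCoord f := by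
  induction u using MvPolynomial.induction_on' with
  | add u v hu hv => rw [add_pow_expChar, add_mul, map_add, hu, hv, add_smul]
  | monomial s c =>
    induction f using MvPolynomial.induction_on' with
    | add f g hf hg => rw [mul_add, map_add, map_add, hf, hg, smul_add]
    | monomial m x =>
      have hdiv : (p • s + m).mapRange (· / p) (Nat.zero_div p) =
          s + m.mapRange (· / p) (Nat.zero_div p) := by
        ext i
        simp [Nat.mul_add_div (expChar_pos R p)]
      have hmod : (p • s + m).mapRange (· % p) (Nat.zero_mod p) =
          m.mapRange (· % p) (Nat.zero_mod p) := by
        ext i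
        simp
      rw [monomial_pow, monomial_mul, mvPolynomialCoord_monomial, mvPolynomialCoord_monomial,
        B.coord_pow_mul, hdiv, hmod, ← Finsupp.mapDomain_smul]
      congr 1
      ext1 i
      simp [monomial_mul]

theorem sum_mvPolynomialCoord [ExpChar R p] (f : MvPolynomial σ R) :
    ((B.mvPolynomialCoord f).sum fun k c ↦ c ^ p * monomial k.1 (B.elem k.2)) = f := by
  have hp : p ≠ 0 := expChar_ne_zero R p
  induction f using MvPolynomial.induction_on' with
  | add f g hf hg =>
    rw [map_add, Finsupp.sum_add_index' (by simp [hp]) (by simp [add_pow_expChar, add_mul]), hf, hg]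
  | monomial m c =>
    rw [mvPolynomialCoord_monomial, Finsupp.sum_mapDomain_index (by simp [hp])
      (by simp [add_pow_expChar, add_mul]), Finsupp.sum_mapRange_index (by simp [hp])]
    simp only [monomial_pow, monomial_mul, smul_mapRange_div_add_mapRange_mod]
    rw [← map_finsuppSum, B.sum_coord]

theorem isHomogeneous_mvPolynomialCoord (hp : 0 < p) {d : ℕ} {f : MvPolynomial σ R}
    (hf : f.IsHomogeneous d) (k : (σ →₀ ℕ) × ι) :
    (B.mvPolynomialCoord f k).IsHomogeneous ((d - k.1.degree) / p) := by
  obtain ⟨r, i⟩ := k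
  rw [f.as_sum, map_sum, Finsupp.finsetSum_apply]
  refine IsHomogeneous.sum _ _ _ fun m hm ↦ ?_
  rw [mvPolynomialCoord_monomial]
  by_cases hr : m.mapRange (· % p) (Nat.zero_mod p) = r
  · subst hr
    rw [Finsupp.mapDomain_apply (Prod.mk_right_injective _)]
    apply isHomogeneous_monomial
    have hd : m.degree = d := not_imp_comm.1 hf.coeff_eq_zero (mem_support_iff.1 hm)
    have hsplit : p * (m.mapRange (· / p) (Nat.zero_div p)).degree +
        (m.mapRange (· % p) (Nat.zero_mod p)).degree = d := by
      rw [← hd, ← smul_eq_mul, ← map_nsmul, ← map_add, smul_mapRange_div_add_mapRange_mod]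
    rw [← hsplit, Nat.add_sub_cancel, Nat.mul_div_cancel_left _ hp]
  · rw [Finsupp.mapDomain_of_notMem_range _ _ (by simp [hr])]
    exact isHomogeneous_zero _ _ _

/-- The Frobenius dual basis of `MvPolynomial σ R` whose generators are the products of the
monomials with the generators of a Frobenius dual basis of `R`. Only the monomials with all
exponents below `p` have nonzero coordinates; allowing all exponents keeps the index type
simple. -/
def mvPolynomial [ExpChar R p] :
    FrobeniusDualBasis p ((σ →₀ ℕ) × ι) (MvPolynomial σ R) where
  elem k := monomial k.1 (B.elem k.2)
  coord := B.mvPolynomialCoord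
  coord_pow_mul := B.mvPolynomialCoord_pow_mul
  sum_coord := B.sum_mvPolynomialCoord

end MvPolynomial

end FrobeniusDualBasis

section GradedRing

theorem exists_lt_mul_pow_notMem {A : Type*} [CommSemiring A] {J : Ideal A} {f g : A} {q : ℕ}
    (hf : f ∉ J) (hg : g ^ q ∈ J) : ∃ k < q, f * g ^ k ∉ J ∧ f * g ^ k * g ∈ J := by
  obtain ⟨k, hk, hk'⟩ := Nat.exists_not_and_succ_of_not_zero_of_exists
    (p := fun k ↦ f * g ^ k ∈ J) (by simpa using hf) ⟨q, J.mul_mem_left f hg⟩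
  refine ⟨k, ?_, hk, by rwa [mul_assoc, ← pow_succ]⟩
  contrapose! hk
  exact J.mul_mem_left f (J.pow_mem_of_pow_mem hg hk)

theorem exists_mem_graded_notMem_mul_mem {A S ι : Type*} [CommSemiring A] [SetLike S A] (𝒜 : ℕ → S)
    [SetLike.GradedMonoid 𝒜] {s : Finset ι} {g : ι → A} {δ : ι → ℕ}
    (hδ : ∀ i ∈ s, g i ∈ 𝒜 (δ i)) {J : Ideal A} (hJ : J ≠ ⊤) {q : ℕ} (hq : ∀ i ∈ s, g i ^ q ∈ J) :
    ∃ d ≤ q * ∑ i ∈ s, δ i, ∃ f ∈ 𝒜 d, f ∉ J ∧ ∀ i ∈ s, f * g i ∈ J := by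
  classical
  induction s using Finset.induction_on with
  | empty =>
    exact ⟨0, Nat.zero_le _, 1, SetLike.one_mem_graded 𝒜, (Ideal.ne_top_iff_one J).1 hJ, by simp⟩
  | insert j s hj ih =>
    rw [Finset.forall_mem_insert] at hδ hq
    obtain ⟨d, hd, f, hfd, hfJ, hfs⟩ := ih hδ.2 hq.2
    obtain ⟨k, hk, hfk, hfk'⟩ := exists_lt_mul_pow_notMem hfJ hq.1
    refine ⟨d + k * δ j, ?_, f * g j ^ k, ?_, hfk, ?_⟩
    · rw [Finset.sum_insert hj, mul_add, add_comm d]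
      gcongr
    · exact SetLike.mul_mem_graded hfd (SetLike.pow_mem_graded k hδ.1)
    · rw [Finset.forall_mem_insert]
      refine ⟨hfk', fun i hi ↦ ?_⟩
      rw [mul_right_comm]
      exact J.mul_mem_right _ (hfs i hi)

theorem exists_finset_homogeneous_span_eq {A S ι : Type*} [Semiring A] [SetLike S A]
    [AddSubmonoidClass S A] [DecidableEq ι] [AddMonoid ι] {𝒜 : ι → S} [GradedRing 𝒜] {I : Ideal A}
    (hI : I.IsHomogeneous 𝒜) (hfg : I.FG) :
    ∃ s : Finset A, (∀ g ∈ s, SetLike.IsHomogeneousElem 𝒜 g) ∧ Ideal.span s = I := by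
  obtain ⟨T, rfl⟩ := (Ideal.IsHomogeneous.iff_exists 𝒜 I).1 hI
  obtain ⟨s, hsT, hspan⟩ := (Submodule.fg_span_iff_fg_span_finset_subset _).1 hfg
  refine ⟨s, fun g hg ↦ ?_, hspan.symm⟩
  obtain ⟨x, -, rfl⟩ := hsT hg
  exact x.2

end GradedRing

section Alphaq

variable {I : Ideal (MvPolynomial (Fin n) K)}

theorem frobPow_le {q : ℕ} (hq : 0 < q) : frobPow I q ≤ I :=
  Ideal.span_le.2 <| Set.image_subset_iff.2 fun _ ha ↦ I.pow_mem_of_mem ha q hq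

theorem pow_mem_frobPow {a : MvPolynomial (Fin n) K} (ha : a ∈ I) (q : ℕ) :
    a ^ q ∈ frobPow I q :=
  Ideal.subset_span ⟨a, ha, rfl⟩

theorem frobPow_mul (p : ℕ) [ExpChar K p] (q : ℕ) :
    frobPow I (p * q) = (frobPow I q).map (frobenius (MvPolynomial (Fin n) K) p) := by
  simp only [frobPow, Ideal.map_span, Set.image_image, frobenius_def, ← pow_mul, mul_comm]

theorem alphaq_le {q d : ℕ} {f : MvPolynomial (Fin n) K} (hf : f.IsHomogeneous d)
    (hfI : f ∈ (frobPow I q).colon I) (hfq : f ∉ frobPow I q) : alphaq I q ≤ d :=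
  Nat.sInf_le ⟨f, hf, hfI, hfq⟩

theorem exists_isHomogeneous_mem_colon_frobPow (hI : IsGraded I) (htop : I ≠ ⊤) :
    ∃ C : ℕ, ∀ q > 0, ∃ d ≤ q * C, ∃ f : MvPolynomial (Fin n) K,
      f.IsHomogeneous d ∧ f ∈ (frobPow I q).colon I ∧ f ∉ frobPow I q := by
  obtain ⟨s, hs, hspan⟩ := exists_finset_homogeneous_span_eq hI (IsNoetherian.noetherian I)
  choose! δ hδ using hs
  refine ⟨∑ g ∈ s, δ g, fun q hq ↦ ?_⟩
  obtain ⟨d, hd, f, hf, hfq, hfs⟩ :=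
    exists_mem_graded_notMem_mul_mem (homogeneousSubmodule (Fin n) K) (g := id) hδ
      (ne_top_of_le_ne_top htop (frobPow_le hq))
      fun g hg ↦ pow_mem_frobPow (hspan ▸ Ideal.subset_span hg) q
  have hcolon : (frobPow I q).colon I = (frobPow I q).colon s := by
    rw [← hspan, Ideal.colon_span]
  exact ⟨d, hd, f, hf, hcolon ▸ Submodule.mem_colon.2 hfs, hfq⟩

theorem exists_isHomogeneous_alphaq (hI : IsGraded I) (htop : I ≠ ⊤) {q : ℕ} (hq : 0 < q) :
    ∃ f : MvPolynomial (Fin n) K, f.IsHomogeneous (alphaq I q) ∧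
      f ∈ (frobPow I q).colon I ∧ f ∉ frobPow I q := by
  obtain ⟨C, hC⟩ := exists_isHomogeneous_mem_colon_frobPow hI htop
  obtain ⟨d, -, hd⟩ := hC q hq
  exact Nat.sInf_mem (s := {d | ∃ f : MvPolynomial (Fin n) K, f.IsHomogeneous d ∧
    f ∈ (frobPow I q).colon I ∧ f ∉ frobPow I q}) ⟨d, hd⟩

theorem mul_alphaq_le (p : ℕ) [ExpChar K p] (hI : IsGraded I) (htop : I ≠ ⊤) {q : ℕ} (hq : 0 < q) :
    p * alphaq I q ≤ alphaq I (p * q) := by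
  have hp : 0 < p := expChar_pos K p
  obtain ⟨f, hf, hfI, hfq⟩ := exists_isHomogeneous_alphaq hI htop (mul_pos hp hq)
  rw [frobPow_mul] at hfI hfq
  let b := FrobeniusDualBasis.ofBasis p (Module.Basis.ofVectorSpace K (AdjoinPthRoots K))
  obtain ⟨k, hk⟩ : ∃ k, b.mvPolynomial.coord f k ∉ frobPow I q := by
    simpa only [b.mvPolynomial.mem_map_frobenius_iff, not_forall] using hfq
  calc p * alphaq I q
      ≤ p * ((alphaq I (p * q) - k.1.degree) / p) := by
        gcongr
        exact alphaq_le (b.isHomogeneous_mvPolynomialCoord hp hf k)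
          (b.mvPolynomial.coord_mem_colon hfI k) hk
    _ ≤ alphaq I (p * q) - k.1.degree := Nat.mul_div_le _ _
    _ ≤ alphaq I (p * q) := Nat.sub_le _ _

theorem monotone_alphaq_div (p : ℕ) [ExpChar K p] (hI : IsGraded I) (htop : I ≠ ⊤)
    {q : ℕ} (hq : 0 < q) :
    Monotone fun e : ℕ ↦ (alphaq I (p ^ e * q) : ℝ) / (p ^ e * q) := by
  refine monotone_nat_of_le_succ fun e ↦ ?_
  have hp : 0 < p := expChar_pos K p
  have h : (p : ℝ) * alphaq I (p ^ e * q) ≤ alphaq I (p ^ (e + 1) * q) := by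
    rw [pow_succ', mul_assoc]
    exact_mod_cast mul_alphaq_le p hI htop (by positivity)
  calc (alphaq I (p ^ e * q) : ℝ) / (p ^ e * q)
      = p * alphaq I (p ^ e * q) / (p ^ (e + 1) * q) := by
        rw [pow_succ', mul_assoc, mul_div_mul_left _ _ (by positivity)]
    _ ≤ alphaq I (p ^ (e + 1) * q) / (p ^ (e + 1) * q) := by gcongr

theorem exists_alphaq_div_le (hI : IsGraded I) (htop : I ≠ ⊤) :
    ∃ C : ℝ, ∀ q : ℕ, 0 < q → (alphaq I q : ℝ) / q ≤ C := by
  obtain ⟨C, hC⟩ := exists_isHomogeneous_mem_colon_frobPow hI htop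
  refine ⟨C, fun q hq ↦ ?_⟩
  obtain ⟨d, hd, f, hf, hfI, hfq⟩ := hC q hq
  rw [div_le_iff₀' (by positivity)]
  exact_mod_cast (alphaq_le hf hfI hfq).trans hd

end Alphaq

theorem stmt16_general (p : ℕ) [ExpChar K p] {I : Ideal (MvPolynomial (Fin n) K)}
    (hI : IsGraded I) (htop : I ≠ ⊤) {q : ℕ} (hq : 0 < q) :
    p * alphaq I q ≤ alphaq I (p * q) ∧
    Monotone (fun e : ℕ ↦ (alphaq I (p ^ e * q) : ℝ) / (p ^ e * q)) ∧
    ∃ L : ℝ, Filter.Tendsto (fun e : ℕ ↦ (alphaq I (p ^ e * q) : ℝ) / (p ^ e * q))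
      Filter.atTop (nhds L) := by
  have hmono := monotone_alphaq_div p hI htop hq
  obtain ⟨C, hC⟩ := exists_alphaq_div_le hI htop
  have hbdd : BddAbove (Set.range fun e : ℕ ↦ (alphaq I (p ^ e * q) : ℝ) / (p ^ e * q)) := by
    refine ⟨C, Set.forall_mem_range.2 fun e ↦ ?_⟩
    exact_mod_cast hC (p ^ e * q) (mul_pos (pow_pos (expChar_pos K p) e) hq)
  exact ⟨mul_alphaq_le p hI htop hq, hmono, _, tendsto_atTop_ciSup hmono hbdd⟩

theorem stmt16 {K : Type*} [Field K] {n : ℕ} (p : ℕ) (hp : p.Prime) [CharP K p]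
    (I : Ideal (MvPolynomial (Fin n) K)) (hgr : IsGraded I) (htop : I ≠ ⊤) (hbot : I ≠ ⊥) :
    (∀ q : ℕ, (∃ e : ℕ, q = p ^ e) → 1 < q → p * alphaq I q ≤ alphaq I (p * q)) ∧
    (∀ e e' : ℕ, 1 ≤ e → e ≤ e' →
      (alphaq I (p ^ e) : ℝ) / (p ^ e : ℝ) ≤ (alphaq I (p ^ e') : ℝ) / (p ^ e' : ℝ)) ∧
    (∃ L : ℝ, Filter.Tendsto (fun e : ℕ => (alphaq I (p ^ e) : ℝ) / (p ^ e : ℝ))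
      Filter.atTop (nhds L)) := by
  have : ExpChar K p := .prime hp
  obtain ⟨-, hmono, hlim⟩ := stmt16_general p hgr htop Nat.one_pos
  simp only [mul_one, Nat.cast_one] at hmono hlim
  exact ⟨fun _ _ hq ↦ (stmt16_general p hgr htop (Nat.zero_lt_of_lt hq)).1,
    fun _ _ _ hle ↦ hmono hle, hlim⟩

end
end

section
/- Let S = K[x_1,…,x_n] be a standard graded polynomial ring over a field K of prime characteristic p, and let I ⊂ S be a proper nonzero unmixed square-free monomial ideal. Then for every power q = p^e with q > n (= dim S), we have ⌈α_q(I)/q⌉ = v(I) + height(I), where ⌈z⌉ denotes the least integer greater than or equal to z. -/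
/-!
A square-free monomial ideal `I` is the edge ideal of a hypergraph, and `I` is the intersection of
the primes `P_C = (x_i : i ∈ C)` over the minimal vertex covers `C`. Say that `A` isolates `C` if
`A` is disjoint from `C` but meets every other minimal vertex cover; this means `(I : x_A) = P_C`,
and `v(I)` is the least size of a set isolating some minimal vertex cover.

If `A` isolates `C`, then `x_A^q x_C^(q-1)` lies in `(I^[q] : I)` but not in `I^[q]`, so
`α_q(I) ≤ q (|A| + |C|)`. Conversely, let `f ∈ (I^[q] : I)` with `f ∉ I^[q]`; then some monomial
`x^m` of `f` has `m_i < q` on a minimal vertex cover `C`. Put `T = {i | m_i ≥ q - 1}`. Each `i ∈ C`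
has an edge `e` with `e ∩ C = {i}`, and `x^m x_e ∈ I^[q]` forces `m_i ≥ q - 1`; thus `C ⊆ T`.
Likewise `T \ C` isolates `C`, so `q (|T \ C| + |C|) = q |T| ≤ ∑ (m_i + 1) ≤ deg f + n`. Since
`n < q`, the ceiling of `α_q(I) / q` is the least value of `|A| + |C|`, and `|C| = height(I)` for
every `C` if `I` is unmixed.
-/

open MvPolynomial

attribute [local instance] MvPolynomial.gradedAlgebra

noncomputable section

variable {K : Type*} [Field K] {n : ℕ}

open scoped Finset

section VertexCover

variable {σ : Type*} {E : Set (Finset σ)} {A C : Finset σ}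

/-- A vertex cover of the hypergraph with edge set `E`; the minimal vertex covers index the minimal
primes of the edge ideal of `E`. -/
def IsVertexCover (E : Set (Finset σ)) (C : Finset σ) : Prop :=
  ∀ e ∈ E, ∃ i ∈ C, i ∈ e

/-- A vertex cover that is minimal under inclusion. -/
abbrev IsMinVertexCover (E : Set (Finset σ)) (C : Finset σ) : Prop :=
  Minimal (IsVertexCover E) C

/-- `A` isolates the minimal vertex cover `C` if `C` is the only minimal vertex cover disjoint from
`A`. This is the combinatorial form of `(I : x_A) = P_C` for the edge ideal `I`. -/
structure Isolates (E : Set (Finset σ)) (A C : Finset σ) : Prop where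
  isMinVertexCover : IsMinVertexCover E C
  disjoint : Disjoint A C
  exists_mem : ∀ C', IsMinVertexCover E C' → C' ≠ C → ∃ i ∈ C', i ∈ A

theorem IsVertexCover.exists_isMinVertexCover_subset (hC : IsVertexCover E C) :
    ∃ C' ⊆ C, IsMinVertexCover E C' :=
  exists_minimal_le_of_wellFoundedLT (IsVertexCover E) C hC

theorem exists_edge_forall_iff_forall_isMinVertexCover_exists [Finite σ] (P : σ → Prop) :
    (∃ e ∈ E, ∀ i ∈ e, P i) ↔ ∀ C, IsMinVertexCover E C → ∃ i ∈ C, P i := by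
  classical
  cases nonempty_fintype σ
  constructor
  · rintro ⟨e, he, hP⟩ C hC
    obtain ⟨i, hiC, hie⟩ := hC.prop e he
    exact ⟨i, hiC, hP i hie⟩
  · contrapose!
    intro h
    have hcover : IsVertexCover E {i | ¬ P i} := fun e he => by
      obtain ⟨i, hie, hi⟩ := h e he
      exact ⟨i, by simpa using hi, hie⟩
    obtain ⟨C, hsub, hC⟩ := hcover.exists_isMinVertexCover_subset
    exact ⟨C, hC, fun i hi => by simpa using hsub hi⟩

theorem IsMinVertexCover.exists_private_edge (hC : IsMinVertexCover E C) {i : σ} (hi : i ∈ C) :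
    ∃ e ∈ E, ∀ j ∈ C, j ∈ e → j = i := by
  classical
  by_contra! h
  have herase : IsVertexCover E (C.erase i) := fun e he => by
    obtain ⟨j, hjC, hje, hji⟩ := h e he
    exact ⟨j, Finset.mem_erase.2 ⟨hji, hjC⟩, hje⟩
  exact Finset.notMem_erase i C (hC.le_of_le herase (Finset.erase_subset i C) hi)

theorem IsMinVertexCover.isolates_compl [Fintype σ] [DecidableEq σ] (hC : IsMinVertexCover E C) :
    Isolates E Cᶜ C where
  isMinVertexCover := hC
  disjoint := disjoint_compl_left
  exists_mem C' hC' hne := by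
    by_contra! h
    have hsub : C' ⊆ C := fun i hi => by simpa using h i hi
    exact hne (hC.eq_of_le hC'.prop hsub)

end VertexCover

section IndicatorExponent

variable {σ : Type*}

/-- The exponent vector of the square-free monomial `x_A = ∏ i ∈ A, x_i`. -/
def indicatorExponent (A : Finset σ) : σ →₀ ℕ :=
  Finsupp.indicator A fun _ _ => 1

theorem indicatorExponent_apply [DecidableEq σ] (A : Finset σ) (i : σ) :
    indicatorExponent A i = if i ∈ A then 1 else 0 := by
  simp [indicatorExponent, Finsupp.indicator_apply]

theorem indicatorExponent_apply_ne_zero {A : Finset σ} {i : σ} :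
    indicatorExponent A i ≠ 0 ↔ i ∈ A := by
  classical
  simp [indicatorExponent_apply]

theorem degree_indicatorExponent (A : Finset σ) : (indicatorExponent A).degree = #A := by
  classical
  have hsupp : (indicatorExponent A).support = A := by
    ext i
    simp [indicatorExponent_apply]
  rw [Finsupp.degree_apply, hsupp]
  simp [indicatorExponent_apply]

theorem smul_indicatorExponent_le_iff {c : ℕ} {A : Finset σ} {m : σ →₀ ℕ} :
    c • indicatorExponent A ≤ m ↔ ∀ i ∈ A, c ≤ m i := by
  classical
  refine forall_congr' fun i => ?_
  by_cases hi : i ∈ A <;> simp [indicatorExponent_apply, hi]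

theorem indicatorExponent_support {a : σ →₀ ℕ} (ha : ∀ i, a i ≤ 1) :
    indicatorExponent a.support = a := by
  classical
  ext i
  have hle : a i ≤ 1 := ha i
  simp only [indicatorExponent_apply, Finsupp.mem_support_iff]
  split_ifs <;> omega

end IndicatorExponent

section IsolatingExponent

variable {σ : Type*} {E : Set (Finset σ)} {q : ℕ} {m : σ →₀ ℕ}

theorem IsMinVertexCover.le_add_one {C : Finset σ} (hC : IsMinVertexCover E C)
    (hE : ∀ e ∈ E, ∃ i ∈ C, q ≤ (m + indicatorExponent e) i) (hlt : ∀ i ∈ C, m i < q)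
    {i : σ} (hi : i ∈ C) : q ≤ m i + 1 := by
  classical
  obtain ⟨e, he, hprivate⟩ := hC.exists_private_edge hi
  obtain ⟨j, hj, hle⟩ := hE e he
  rw [Finsupp.add_apply, indicatorExponent_apply] at hle
  have hje : j ∈ e := by
    by_contra hje
    rw [if_neg hje] at hle
    exact (hlt j hj).not_ge hle
  rwa [hprivate j hj hje, if_pos (hprivate j hj hje ▸ hje)] at hle

variable [Fintype σ]

theorem IsMinVertexCover.isolates_filter_sdiff [DecidableEq σ] {C : Finset σ}
    (hC : IsMinVertexCover E C)
    (hE : ∀ C', IsMinVertexCover E C' → ∀ e ∈ E, ∃ i ∈ C', q ≤ (m + indicatorExponent e) i)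
    (hlt : ∀ i ∈ C, m i < q) : Isolates E (({i | q ≤ m i + 1} : Finset σ) \ C) C where
  isMinVertexCover := hC
  disjoint := Finset.sdiff_disjoint
  exists_mem C' hC' hne := by
    by_cases hlt' : ∀ i ∈ C', m i < q
    · obtain ⟨i, hi, hiC⟩ : ∃ i ∈ C', i ∉ C := by
        by_contra! hsub
        exact hne (hC.eq_of_le hC'.prop hsub)
      exact ⟨i, hi, by simpa [hiC] using hC'.le_add_one (hE C' hC') hlt' hi⟩
    · push Not at hlt'
      obtain ⟨i, hi, hqi⟩ := hlt'
      have hiC : i ∉ C := fun hiC => (hlt i hiC).not_ge hqi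
      exact ⟨i, hi, by simpa [hiC] using hqi.trans (Nat.le_succ _)⟩

theorem mul_card_filter_le_degree_add_card (q : ℕ) (m : σ →₀ ℕ) :
    q * #{i | q ≤ m i + 1} ≤ m.degree + Fintype.card σ := calc
  q * #{i | q ≤ m i + 1} = #{i | q ≤ m i + 1} • q := mul_comm _ _
  _ ≤ ∑ i with q ≤ m i + 1, (m i + 1) :=
    Finset.card_nsmul_le_sum _ _ _ fun _ hi => (Finset.mem_filter.1 hi).2
  _ ≤ ∑ i, (m i + 1) := Finset.sum_le_sum_of_subset (Finset.filter_subset _ _)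
  _ = m.degree + Fintype.card σ := by
    rw [Finset.sum_add_distrib, Finsupp.degree_eq_sum, Fintype.card_eq_sum_ones]

theorem IsMinVertexCover.exists_isolates_mul_card_le {C : Finset σ} (hC : IsMinVertexCover E C)
    (hE : ∀ C', IsMinVertexCover E C' → ∀ e ∈ E, ∃ i ∈ C', q ≤ (m + indicatorExponent e) i)
    (hlt : ∀ i ∈ C, m i < q) :
    ∃ A, Isolates E A C ∧ q * (#A + #C) ≤ m.degree + Fintype.card σ := by
  classical
  have hsub : C ⊆ ({i | q ≤ m i + 1} : Finset σ) := fun i hi => by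
    simpa using hC.le_add_one (hE C hC) hlt hi
  refine ⟨_, hC.isolates_filter_sdiff hE hlt, ?_⟩
  rw [Finset.card_sdiff_add_card_eq_card hsub]
  exact mul_card_filter_le_degree_add_card q m

end IsolatingExponent

section CoverPrime

variable {σ R : Type*}

section CommSemiring

variable [CommSemiring R] {C C' : Finset σ}

variable (R) in
/-- The ideal `P_C` generated by the variables `x_i` with `i ∈ C`. -/
def coverPrime (C : Finset σ) : Ideal (MvPolynomial σ R) :=
  Ideal.span (X '' (C : Set σ))

theorem mem_coverPrime_iff {f : MvPolynomial σ R} :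
    f ∈ coverPrime R C ↔ ∀ m ∈ f.support, ∃ i ∈ C, m i ≠ 0 := by
  simp only [coverPrime, mem_ideal_span_X_image, Finset.mem_coe]

theorem monomial_mem_coverPrime_iff [Nontrivial R] {m : σ →₀ ℕ} :
    monomial m (1 : R) ∈ coverPrime R C ↔ ∃ i ∈ C, m i ≠ 0 := by
  classical
  simp [mem_coverPrime_iff, support_monomial]

theorem coverPrime_le_coverPrime_iff [Nontrivial R] :
    coverPrime R C ≤ coverPrime R C' ↔ C ⊆ C' := by
  refine ⟨fun h i hi => ?_, fun h => Ideal.span_mono (Set.image_mono (Finset.coe_subset.2 h))⟩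
  have hX : monomial (Finsupp.single i 1) (1 : R) ∈ coverPrime R C' :=
    h (monomial_mem_coverPrime_iff.2 ⟨i, hi, by simp⟩)
  obtain ⟨j, hj, hne⟩ := monomial_mem_coverPrime_iff.1 hX
  exact (Finsupp.single_apply_ne_zero.1 hne).1 ▸ hj

theorem coverPrime_injective [Nontrivial R] :
    Function.Injective (coverPrime R : Finset σ → Ideal (MvPolynomial σ R)) := fun _ _ h =>
  (coverPrime_le_coverPrime_iff.1 h.le).antisymm (coverPrime_le_coverPrime_iff.1 h.ge)

end CommSemiring

section CommRing

variable [CommRing R]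

open Classical in
theorem coverPrime_eq_ker_aeval (C : Finset σ) :
    coverPrime R C =
      RingHom.ker (aeval (R := R) fun i => if i ∈ C then (0 : MvPolynomial σ R) else X i) := by
  set φ := aeval (R := R) fun i => if i ∈ C then (0 : MvPolynomial σ R) else X i
  apply le_antisymm
  · rw [coverPrime, Ideal.span_le]
    rintro _ ⟨i, hi, rfl⟩
    simp [φ, Finset.mem_coe.1 hi]
  · have hφ : (Ideal.Quotient.mkₐ R (coverPrime R C)).comp φ =
        Ideal.Quotient.mkₐ R (coverPrime R C) := by
      refine algHom_ext fun i => ?_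
      by_cases hi : i ∈ C
      · have hX : (X i : MvPolynomial σ R) ∈ coverPrime R C := Ideal.subset_span ⟨i, hi, rfl⟩
        simp [φ, hi, Ideal.Quotient.eq_zero_iff_mem.2 hX]
      · simp [φ, hi]
    intro f hf
    have hf' := DFunLike.congr_fun hφ f
    rw [AlgHom.comp_apply, RingHom.mem_ker.1 hf, map_zero] at hf'
    exact Ideal.Quotient.eq_zero_iff_mem.1 hf'.symm

variable [IsDomain R]

instance isPrime_coverPrime (C : Finset σ) : (coverPrime R C).IsPrime := by
  rw [coverPrime_eq_ker_aeval]
  exact RingHom.ker_isPrime _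

theorem card_le_height_coverPrime (C : Finset σ) : (#C : ℕ∞) ≤ (coverPrime R C).height := by
  classical
  induction C using Finset.induction_on with
  | empty => simp
  | insert i C hi ih =>
    have hlt : coverPrime R C < coverPrime R (insert i C) :=
      (coverPrime_le_coverPrime_iff.2 (Finset.subset_insert i C)).lt_of_ne fun h =>
        hi (coverPrime_injective h ▸ Finset.mem_insert_self i C)
    rw [Finset.card_insert_of_notMem hi, Nat.cast_add, Nat.cast_one]
    exact (add_le_add_left ih 1).trans (Ideal.height_add_one_le_of_lt_of_isPrime hlt)

theorem height_coverPrime [IsNoetherianRing R] [Finite σ] (C : Finset σ) :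
    (coverPrime R C).height = #C := by
  refine le_antisymm ?_ (card_le_height_coverPrime C)
  have hmin : coverPrime R C ∈ (coverPrime R C).minimalPrimes := by
    rw [Ideal.minimalPrimes_eq_subsingleton_self, Set.mem_singleton_iff]
  calc (coverPrime R C).height
      ≤ (X '' (C : Set σ) : Set (MvPolynomial σ R)).ncard :=
        Ideal.height_le_card_of_mem_minimalPrimes_span (C.finite_toSet.image X) hmin
    _ ≤ #C := by
        rw [← Set.ncard_coe_finset C]
        exact_mod_cast Set.ncard_image_le C.finite_toSet

end CommRing

end CoverPrime

section EdgeIdeal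

variable {σ R : Type*} {E : Set (Finset σ)} {A C : Finset σ}

section CommSemiring

variable [CommSemiring R]

variable (R) in
/-- The edge ideal of the hypergraph `E`, generated by the square-free monomials `x_e` for `e ∈ E`.
Every square-free monomial ideal is of this form. -/
def edgeIdeal (E : Set (Finset σ)) : Ideal (MvPolynomial σ R) :=
  Ideal.span ((fun e => monomial (indicatorExponent e) 1) '' E)

theorem exists_span_monomial_eq_edgeIdeal {s : Set (σ →₀ ℕ)} (hs : ∀ a ∈ s, ∀ i, a i ≤ 1) :
    ∃ E : Set (Finset σ), Ideal.span ((fun a => monomial a (1 : R)) '' s) = edgeIdeal R E := by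
  refine ⟨Finsupp.support '' s, ?_⟩
  rw [edgeIdeal, Set.image_image]
  congr 1
  exact Set.image_congr fun a ha => by rw [indicatorExponent_support (hs a ha)]

variable [Finite σ]

theorem mem_span_monomial_smul_indicatorExponent_iff {c : ℕ} {f : MvPolynomial σ R} :
    f ∈ Ideal.span ((fun e => monomial (c • indicatorExponent e) (1 : R)) '' E) ↔
      ∀ m ∈ f.support, ∀ C, IsMinVertexCover E C → ∃ i ∈ C, c ≤ m i := by
  rw [← Set.image_image (fun a => monomial a (1 : R)), mem_ideal_span_monomial_image]
  refine forall₂_congr fun m _ => ?_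
  rw [← exists_edge_forall_iff_forall_isMinVertexCover_exists, Set.exists_mem_image]
  simp only [smul_indicatorExponent_le_iff]

theorem mem_edgeIdeal_iff {f : MvPolynomial σ R} :
    f ∈ edgeIdeal R E ↔ ∀ C, IsMinVertexCover E C → f ∈ coverPrime R C := by
  have h := mem_span_monomial_smul_indicatorExponent_iff (E := E) (c := 1) (f := f)
  simp only [one_smul, Nat.one_le_iff_ne_zero] at h
  rw [edgeIdeal, h]
  simp only [mem_coverPrime_iff]
  exact ⟨fun h C hC m hm => h m hm C hC, fun h m hm C hC => h C hC m hm⟩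

theorem exists_isMinVertexCover_of_edgeIdeal_ne_top (h : edgeIdeal R E ≠ ⊤) :
    ∃ C, IsMinVertexCover E C := by
  contrapose! h
  rw [Ideal.eq_top_iff_one, mem_edgeIdeal_iff]
  exact fun C hC => absurd hC (h C)

end CommSemiring

section Colon

variable [CommRing R] [IsDomain R] [Finite σ] {f g : MvPolynomial σ R}

theorem mem_colon_edgeIdeal_iff :
    g ∈ (edgeIdeal R E).colon (Ideal.span {f}) ↔
      ∀ C, IsMinVertexCover E C → g ∈ coverPrime R C ∨ f ∈ coverPrime R C := by
  rw [Ideal.mem_colon_span_singleton, mem_edgeIdeal_iff]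
  exact forall₂_congr fun C _ => (isPrime_coverPrime C).mul_mem_iff_mem_or_mem

theorem colon_edgeIdeal_eq_coverPrime_iff (hC : IsMinVertexCover E C) :
    (edgeIdeal R E).colon (Ideal.span {f}) = coverPrime R C ↔
      f ∉ coverPrime R C ∧ ∀ C', IsMinVertexCover E C' → C' ≠ C → f ∈ coverPrime R C' := by
  constructor
  · intro hcolon
    have hother : ∀ C', IsMinVertexCover E C' → C' ≠ C → f ∈ coverPrime R C' := by
      intro C' hC' hne
      by_contra hf
      have hle : coverPrime R C ≤ coverPrime R C' := fun g hg =>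
        (mem_colon_edgeIdeal_iff.1 (hcolon ▸ hg) C' hC').resolve_right hf
      exact hne (hC'.eq_of_le hC.prop (coverPrime_le_coverPrime_iff.1 hle)).symm
    refine ⟨fun hf => (isPrime_coverPrime (R := R) C).one_notMem ?_, hother⟩
    rw [← hcolon, mem_colon_edgeIdeal_iff]
    intro C' hC'
    by_cases hne : C' = C
    · exact .inr (hne ▸ hf)
    · exact .inr (hother C' hC' hne)
  · rintro ⟨hf, hother⟩
    ext g
    rw [mem_colon_edgeIdeal_iff]
    refine ⟨fun hg => (hg C hC).resolve_right hf, fun hg C' hC' => ?_⟩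
    by_cases hne : C' = C
    · exact .inl (hne ▸ hg)
    · exact .inr (hother C' hC' hne)

theorem exists_colon_edgeIdeal_eq_coverPrime
    (hprime : ((edgeIdeal R E).colon (Ideal.span {f} : Set (MvPolynomial σ R))).IsPrime) :
    ∃ C, IsMinVertexCover E C ∧ (edgeIdeal R E).colon (Ideal.span {f}) = coverPrime R C := by
  classical
  cases nonempty_fintype σ
  have hinf : (edgeIdeal R E).colon (Ideal.span {f}) =
      ({C | IsMinVertexCover E C ∧ f ∉ coverPrime R C} : Finset (Finset σ)).inf (coverPrime R) := by
    ext g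
    simp only [mem_colon_edgeIdeal_iff, Submodule.mem_finsetInf, Finset.mem_filter_univ, and_imp]
    exact forall₂_congr fun C _ => by tauto
  rw [hinf] at hprime ⊢
  obtain ⟨C, hC, hcolon⟩ := Ideal.eq_inf_of_isPrime_inf hprime
  exact ⟨C, (Finset.mem_filter.1 hC).2.1, hcolon.symm⟩

theorem Isolates.colon_edgeIdeal_eq_coverPrime (h : Isolates E A C) :
    (edgeIdeal R E).colon (Ideal.span {monomial (indicatorExponent A) (1 : R)}) =
      coverPrime R C := by
  simp only [colon_edgeIdeal_eq_coverPrime_iff h.isMinVertexCover, monomial_mem_coverPrime_iff,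
    indicatorExponent_apply_ne_zero]
  refine ⟨?_, h.exists_mem⟩
  rintro ⟨i, hiC, hiA⟩
  exact Finset.disjoint_left.1 h.disjoint hiA hiC

theorem exists_isolates_card_le_of_colon_eq (hC : IsMinVertexCover E C) {d : ℕ}
    (hf : f.IsHomogeneous d) (hcolon : (edgeIdeal R E).colon (Ideal.span {f}) = coverPrime R C) :
    ∃ A, Isolates E A C ∧ #A ≤ d := by
  obtain ⟨hfC, hother⟩ := (colon_edgeIdeal_eq_coverPrime_iff hC).1 hcolon
  rw [mem_coverPrime_iff] at hfC
  push Not at hfC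
  obtain ⟨m, hm, hmC⟩ := hfC
  refine ⟨m.support, ⟨hC, ?_, fun C' hC' hne => ?_⟩, ?_⟩
  · exact Finset.disjoint_right.2 fun i hi => Finsupp.notMem_support_iff.2 (hmC i hi)
  · simpa only [Finsupp.mem_support_iff] using mem_coverPrime_iff.1 (hother C' hC' hne) m hm
  · calc #m.support = ∑ i ∈ m.support, 1 := Finset.card_eq_sum_ones _
      _ ≤ ∑ i ∈ m.support, m i := Finset.sum_le_sum fun i hi =>
          Nat.one_le_iff_ne_zero.2 (Finsupp.mem_support_iff.1 hi)
      _ = d := not_imp_comm.1 hf.coeff_eq_zero (mem_support_iff.1 hm)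

end Colon

end EdgeIdeal

section AssociatedPrimes

variable {E : Set (Finset (Fin n))} {A C : Finset (Fin n)}

theorem mem_Ass_iff {I 𝔭 : Ideal (MvPolynomial (Fin n) K)} :
    𝔭 ∈ Ass I ↔ 𝔭.IsPrime ∧ ∃ f : MvPolynomial (Fin n) K, I.colon (Ideal.span {f}) = 𝔭 := by
  have hcolon (f : MvPolynomial (Fin n) K) :
      (⊥ : Submodule (MvPolynomial (Fin n) K) (MvPolynomial (Fin n) K ⧸ I)).colon
        {Ideal.Quotient.mk I f} = I.colon (Ideal.span {f}) := by
    ext g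
    rw [Submodule.mem_colon_singleton, Ideal.mem_colon_span_singleton, Submodule.mem_bot,
      ← Ideal.Quotient.eq_zero_iff_mem]
    rfl
  rw [Ass, AssociatedPrimes.mem_iff, isAssociatedPrime_iff,
    Ideal.Quotient.mk_surjective.exists]
  simp only [hcolon, eq_comm]

theorem mem_Ass_edgeIdeal_iff {𝔭 : Ideal (MvPolynomial (Fin n) K)} :
    𝔭 ∈ Ass (edgeIdeal K E) ↔ ∃ C, IsMinVertexCover E C ∧ 𝔭 = coverPrime K C := by
  rw [mem_Ass_iff]
  constructor
  · rintro ⟨hprime, f, rfl⟩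
    exact exists_colon_edgeIdeal_eq_coverPrime hprime
  · rintro ⟨C, hC, rfl⟩
    exact ⟨isPrime_coverPrime C, _, hC.isolates_compl.colon_edgeIdeal_eq_coverPrime⟩

theorem Isolates.vnum_edgeIdeal_le (h : Isolates E A C) : vnum (edgeIdeal K E) ≤ #A :=
  Nat.sInf_le ⟨monomial (indicatorExponent A) 1,
    isHomogeneous_monomial _ (degree_indicatorExponent A), coverPrime K C,
    mem_Ass_edgeIdeal_iff.2 ⟨C, h.isMinVertexCover, rfl⟩, h.colon_edgeIdeal_eq_coverPrime⟩

theorem isLeast_vnum_edgeIdeal (hE : edgeIdeal K E ≠ ⊤) :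
    IsLeast {d | ∃ A C, Isolates E A C ∧ #A = d} (vnum (edgeIdeal K E)) := by
  have hmem : vnum (edgeIdeal K E) ∈ {d : ℕ | ∃ f : MvPolynomial (Fin n) K, f.IsHomogeneous d ∧
      ∃ 𝔭 ∈ Ass (edgeIdeal K E), (edgeIdeal K E).colon (Ideal.span {f}) = 𝔭} := by
    obtain ⟨C, hC⟩ := exists_isMinVertexCover_of_edgeIdeal_ne_top hE
    exact Nat.sInf_mem ⟨_, _, isHomogeneous_monomial _ (degree_indicatorExponent Cᶜ), _,
      mem_Ass_edgeIdeal_iff.2 ⟨C, hC, rfl⟩, hC.isolates_compl.colon_edgeIdeal_eq_coverPrime⟩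
  obtain ⟨f, hf, 𝔭, h𝔭, hcolon⟩ := hmem
  obtain ⟨C, hC, rfl⟩ := mem_Ass_edgeIdeal_iff.1 h𝔭
  obtain ⟨A, hA, hcard⟩ := exists_isolates_card_le_of_colon_eq hC hf hcolon
  refine ⟨⟨A, C, hA, hcard.antisymm hA.vnum_edgeIdeal_le⟩, ?_⟩
  rintro _ ⟨A', C', hA', rfl⟩
  exact hA'.vnum_edgeIdeal_le

theorem exists_mem_Ass_edgeIdeal_height_eq_iff {h : ℕ} :
    (∃ 𝔭 ∈ Ass (edgeIdeal K E), ∃ h𝔭 : 𝔭.IsPrime,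
      Order.height (⟨𝔭, h𝔭⟩ : PrimeSpectrum (MvPolynomial (Fin n) K)) = (h : ℕ∞)) ↔
      ∃ C, IsMinVertexCover E C ∧ #C = h := by
  have hheight (C : Finset (Fin n)) : Order.height
      (⟨coverPrime K C, isPrime_coverPrime C⟩ : PrimeSpectrum (MvPolynomial (Fin n) K)) = #C := by
    rw [← PrimeSpectrum.height_eq_orderHeight, height_coverPrime]
  constructor
  · rintro ⟨𝔭, hmem, h𝔭, hh⟩
    obtain ⟨C, hC, rfl⟩ := mem_Ass_edgeIdeal_iff.1 hmem
    exact ⟨C, hC, by exact_mod_cast (hheight C).symm.trans hh⟩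
  · rintro ⟨C, hC, rfl⟩
    exact ⟨_, mem_Ass_edgeIdeal_iff.2 ⟨C, hC, rfl⟩, isPrime_coverPrime C, hheight C⟩

theorem IsMinVertexCover.card_eq_heightI
    (hunm : heightI (edgeIdeal K E) = bightI (edgeIdeal K E)) (hC : IsMinVertexCover E C) :
    #C = heightI (edgeIdeal K E) := by
  have hle : heightI (edgeIdeal K E) ≤ #C :=
    Nat.sInf_le (exists_mem_Ass_edgeIdeal_height_eq_iff.2 ⟨C, hC, rfl⟩)
  have hge : #C ≤ bightI (edgeIdeal K E) := by
    refine le_csSup ⟨n, ?_⟩ (exists_mem_Ass_edgeIdeal_height_eq_iff.2 ⟨C, hC, rfl⟩)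
    intro h hh
    obtain ⟨C', -, rfl⟩ := exists_mem_Ass_edgeIdeal_height_eq_iff.1 hh
    exact card_finset_fin_le C'
  exact (hge.trans hunm.ge).antisymm hle

theorem isLeast_vnum_add_heightI (hE : edgeIdeal K E ≠ ⊤)
    (hunm : heightI (edgeIdeal K E) = bightI (edgeIdeal K E)) :
    IsLeast {k | ∃ A C, Isolates E A C ∧ #A + #C = k}
      (vnum (edgeIdeal K E) + heightI (edgeIdeal K E)) := by
  obtain ⟨⟨A, C, hA, hcard⟩, hleast⟩ := isLeast_vnum_edgeIdeal hE
  refine ⟨⟨A, C, hA, by rw [hcard, hA.isMinVertexCover.card_eq_heightI hunm]⟩, ?_⟩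
  rintro _ ⟨A', C', hA', rfl⟩
  rw [hA'.isMinVertexCover.card_eq_heightI hunm]
  exact Nat.add_le_add_right (hleast ⟨A', C', hA', rfl⟩) _

end AssociatedPrimes

theorem support_mul_monomial_one {σ R : Type*} [CommSemiring R] (f : MvPolynomial σ R)
    (a : σ →₀ ℕ) : (f * monomial a 1).support = f.support.map (addRightEmbedding a) :=
  AddMonoidAlgebra.support_coeff_mul_single f _ (by simp) _

theorem ceil_natCast_div_natCast_eq {R : Type*} [Field R] [LinearOrder R] [IsStrictOrderedRing R]
    [FloorRing R] {a q k : ℕ} (hlower : q * k < a + q) (hupper : a ≤ q * k) :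
    ⌈(a : R) / q⌉ = (k : ℤ) := by
  have hq : (0 : R) < q := by
    exact_mod_cast (by omega : 0 < q)
  have hlower' : (q : R) * k < a + q := by exact_mod_cast hlower
  have hupper' : (a : R) ≤ q * k := by exact_mod_cast hupper
  rw [Int.ceil_eq_iff, Int.cast_natCast, lt_div_iff₀ hq, div_le_iff₀ hq]
  constructor <;> linarith

section Frobenius

variable {E : Set (Finset (Fin n))} {A C : Finset (Fin n)} (p : ℕ) [ExpChar K p] (e : ℕ)
  {f : MvPolynomial (Fin n) K}

theorem frobPow_span (s : Set (MvPolynomial (Fin n) K)) :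
    frobPow (Ideal.span s) (p ^ e) = Ideal.span ((fun a => a ^ p ^ e) '' s) := by
  have hmap (J : Ideal (MvPolynomial (Fin n) K)) :
      frobPow J (p ^ e) = J.map (iterateFrobenius (MvPolynomial (Fin n) K) p e) := rfl
  rw [hmap, Ideal.map_span]
  rfl

theorem mem_frobPow_edgeIdeal_iff :
    f ∈ frobPow (edgeIdeal K E) (p ^ e) ↔
      ∀ m ∈ f.support, ∀ C, IsMinVertexCover E C → ∃ i ∈ C, p ^ e ≤ m i := by
  rw [edgeIdeal, frobPow_span, Set.image_image]
  simp only [monomial_pow, one_pow, mem_span_monomial_smul_indicatorExponent_iff]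

theorem mem_colon_frobPow_edgeIdeal_iff :
    f ∈ (frobPow (edgeIdeal K E) (p ^ e)).colon (edgeIdeal K E) ↔
      ∀ m ∈ f.support, ∀ C, IsMinVertexCover E C →
        ∀ a ∈ E, ∃ i ∈ C, p ^ e ≤ (m + indicatorExponent a) i := by
  have hspan : (frobPow (edgeIdeal K E) (p ^ e)).colon (edgeIdeal K E) =
      (frobPow (edgeIdeal K E) (p ^ e)).colon
        ((fun a => monomial (indicatorExponent a) (1 : K)) '' E) :=
    Ideal.colon_span
  simp only [hspan, Submodule.mem_colon, Set.forall_mem_image, smul_eq_mul,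
    mem_frobPow_edgeIdeal_iff, support_mul_monomial_one, Finset.forall_mem_map,
    addRightEmbedding_apply]
  exact ⟨fun h m hm C hC a ha => h ha m hm C hC, fun h a ha m hm C hC => h m hm C hC a ha⟩

theorem Isolates.exists_isHomogeneous_mem_colon_frobPow (h : Isolates E A C) :
    ∃ f : MvPolynomial (Fin n) K, f.IsHomogeneous (p ^ e * #A + (p ^ e - 1) * #C) ∧
      f ∈ (frobPow (edgeIdeal K E) (p ^ e)).colon (edgeIdeal K E) ∧
      f ∉ frobPow (edgeIdeal K E) (p ^ e) := by
  have hpos : 0 < p ^ e := expChar_pow_pos K p e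
  set m := p ^ e • indicatorExponent A + (p ^ e - 1) • indicatorExponent C with hm
  have hmA {i} (hi : i ∈ A) : p ^ e ≤ m i := by
    simp [hm, indicatorExponent_apply, hi]
  have hmC {i} (hi : i ∈ C) : m i = p ^ e - 1 := by
    simp [hm, indicatorExponent_apply, hi, Finset.disjoint_right.1 h.disjoint hi]
  have hsupp : (monomial m (1 : K)).support = {m} := by
    classical
    rw [support_monomial, if_neg one_ne_zero]
  refine ⟨monomial m 1, isHomogeneous_monomial _ ?_, ?_, ?_⟩
  · simp [hm, degree_indicatorExponent]
  · rw [mem_colon_frobPow_edgeIdeal_iff, hsupp]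
    simp only [Finset.mem_singleton, forall_eq, Finsupp.add_apply]
    intro C' hC' a ha
    by_cases hne : C' = C
    · obtain ⟨i, hi, hia⟩ := h.isMinVertexCover.prop a ha
      refine ⟨i, hne ▸ hi, ?_⟩
      rw [hmC hi, indicatorExponent_apply, if_pos hia]
      omega
    · obtain ⟨i, hi, hiA⟩ := h.exists_mem C' hC' hne
      exact ⟨i, hi, le_add_right (hmA hiA)⟩
  · rw [mem_frobPow_edgeIdeal_iff, hsupp]
    simp only [Finset.mem_singleton, forall_eq, not_forall]
    refine ⟨C, h.isMinVertexCover, ?_⟩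
    rintro ⟨i, hi, hle⟩
    rw [hmC hi] at hle
    omega

theorem exists_isolates_mul_card_le_of_mem_colon_frobPow {d : ℕ} (hf : f.IsHomogeneous d)
    (hcolon : f ∈ (frobPow (edgeIdeal K E) (p ^ e)).colon (edgeIdeal K E))
    (hnot : f ∉ frobPow (edgeIdeal K E) (p ^ e)) :
    ∃ A C, Isolates E A C ∧ p ^ e * (#A + #C) ≤ d + n := by
  rw [mem_frobPow_edgeIdeal_iff] at hnot
  push Not at hnot
  obtain ⟨m, hm, C, hC, hlt⟩ := hnot
  obtain ⟨A, hA, hle⟩ := hC.exists_isolates_mul_card_le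
    ((mem_colon_frobPow_edgeIdeal_iff p e).1 hcolon m hm) hlt
  have hdeg : m.degree = d := not_imp_comm.1 hf.coeff_eq_zero (mem_support_iff.1 hm)
  exact ⟨A, C, hA, by rwa [hdeg, Fintype.card_fin] at hle⟩

theorem ceil_alphaq_edgeIdeal_div_eq {k : ℕ} (hn : n < p ^ e)
    (hk : IsLeast {k | ∃ A C, Isolates E A C ∧ #A + #C = k} k) :
    ⌈(alphaq (edgeIdeal K E) (p ^ e) : ℝ) / ((p ^ e : ℕ) : ℝ)⌉ = (k : ℤ) := by
  obtain ⟨⟨A, C, hA, rfl⟩, hleast⟩ := hk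
  have hwitness := hA.exists_isHomogeneous_mem_colon_frobPow (K := K) p e
  have hupper : alphaq (edgeIdeal K E) (p ^ e) ≤ p ^ e * (#A + #C) := calc
    alphaq (edgeIdeal K E) (p ^ e) ≤ p ^ e * #A + (p ^ e - 1) * #C := Nat.sInf_le hwitness
    _ ≤ p ^ e * #A + p ^ e * #C := by gcongr; omega
    _ = p ^ e * (#A + #C) := (mul_add _ _ _).symm
  have hlower : p ^ e * (#A + #C) < alphaq (edgeIdeal K E) (p ^ e) + p ^ e := by
    obtain ⟨f, hf, hcolon, hnot⟩ : alphaq (edgeIdeal K E) (p ^ e) ∈ {d : ℕ | ∃ f, _} :=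
      Nat.sInf_mem ⟨_, hwitness⟩
    obtain ⟨A', C', hA', hle⟩ :=
      exists_isolates_mul_card_le_of_mem_colon_frobPow p e hf hcolon hnot
    calc p ^ e * (#A + #C) ≤ p ^ e * (#A' + #C') :=
          Nat.mul_le_mul_left _ (hleast ⟨A', C', hA', rfl⟩)
      _ ≤ alphaq (edgeIdeal K E) (p ^ e) + n := hle
      _ < alphaq (edgeIdeal K E) (p ^ e) + p ^ e := Nat.add_lt_add_left hn _
  exact ceil_natCast_div_natCast_eq hlower hupper

end Frobenius

theorem stmt19 {K : Type*} [Field K] {n : ℕ} (p : ℕ) (hp : p.Prime) [CharP K p]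
    (I : Ideal (MvPolynomial (Fin n) K)) (htop : I ≠ ⊤) (hbot : I ≠ ⊥)
    (hsqf : ∃ s : Set (Fin n →₀ ℕ), (∀ a ∈ s, ∀ i, a i ≤ 1) ∧
      I = Ideal.span ((fun a => monomial a (1 : K)) '' s))
    (hunm : heightI I = bightI I)
    (q : ℕ) (hq : ∃ e : ℕ, q = p ^ e) (hqn : n < q) :
    ⌈(alphaq I q : ℝ) / (q : ℝ)⌉ = (vnum I : ℤ) + (heightI I : ℤ) := by
  obtain ⟨s, hs, hI⟩ := hsqf
  obtain ⟨e, rfl⟩ := hq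
  obtain ⟨E, hE⟩ := exists_span_monomial_eq_edgeIdeal (R := K) hs
  obtain rfl : I = edgeIdeal K E := hI.trans hE
  have : ExpChar K p := ExpChar.prime hp
  rw [ceil_alphaq_edgeIdeal_div_eq p e hqn (isLeast_vnum_add_heightI htop hunm), Nat.cast_add]

end
end
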